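/- Let ψ be the (σ,λ)-GFF on V_N and f_N^ψ(β) = (1/log N²) log Σ_{v∈V_N} e^{βψ_v}. For every β > 0 and every 1 ≤ p < ∞, the family {|f_N^ψ(β)|^p}_{N∈ℕ} is uniformly integrable: lim_{α→∞} sup_{N∈ℕ} E[|f_N^ψ(β)|^p · 1_{{|f_N^ψ(β)|^p > α}}] = 0. -/

import Mathlib

open Filter
open scoped Classical

noncomputable section GFFCommon

/-- Vertices of `ℤ²`. -/
abbrev Vtx : Type := ℤ × ℤ

/-- Sample space: a real-valued field indexed by the vertices of `ℤ²`. -/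
abbrev FieldSp : Type := Vtx → ℝ

/-- The box `V_N = {0,1,…,N}²`. -/
def VN (N : ℕ) : Finset Vtx := Finset.Icc (0, 0) ((N : ℤ), (N : ℤ))

/-- The boundary `∂B` of a finite box `B ⊆ ℤ²`:
vertices of `B` having a (Euclidean distance 1) neighbour outside `B`. -/
def bdry (B : Finset Vtx) : Finset Vtx :=
  B.filter fun v =>
    ¬((v.1 + 1, v.2) ∈ B ∧ (v.1 - 1, v.2) ∈ B ∧ (v.1, v.2 + 1) ∈ B ∧ (v.1, v.2 - 1) ∈ B)

/-- The interior `B° = B ∖ ∂B`. -/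
def intr (B : Finset Vtx) : Finset Vtx := B \ bdry B

/-- The neighbourhood `[v]_λ` of `v` in `V_N`. -/
def nbhd (N : ℕ) (lam : ℝ) (v : Vtx) : Finset Vtx :=
  if lam = 0 then VN N
  else if lam = 1 then {v}
  else (VN N).filter fun w =>
    |(w.1 : ℝ) - (v.1 : ℝ)| ≤ (N : ℝ) ^ ((1 : ℝ) - lam) / 2 ∧
    |(w.2 : ℝ) - (v.2 : ℝ)| ≤ (N : ℝ) ^ ((1 : ℝ) - lam) / 2

/-- The σ-algebra `F_{∂[v]_λ ∪ [v]_λ^c}`, generated by the field variables on the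
boundary of `[v]_λ` and those outside of it. -/
def scaleAlg (N : ℕ) (lam : ℝ) (v : Vtx) : MeasurableSpace FieldSp :=
  ⨆ w ∈ {w : Vtx | w ∈ VN N ∧ w ∉ intr (nbhd N lam v)},
    MeasurableSpace.comap (fun ω : FieldSp => ω w) inferInstance

/-- `G` is the Green function of simple random walk killed on `∂B`, normalized by `π/2`:
it vanishes unless both arguments are in `B°`, and in `B°` it satisfies the
first-step (discrete Poisson equation) characterization
`G(x,y) = (1/4)·Σ_{x'∼x} G(x',y) + (π/2)·1_{x=y}`. -/
def IsGreenFn (B : Finset Vtx) (G : Vtx → Vtx → ℝ) : Prop :=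
  (∀ x y : Vtx, x ∉ intr B ∨ y ∉ intr B → G x y = 0) ∧
  ∀ y ∈ intr B, ∀ x ∈ intr B,
    G x y = (G (x.1 + 1, x.2) y + G (x.1 - 1, x.2) y
        + G (x.1, x.2 + 1) y + G (x.1, x.2 - 1) y) / 4
      + (Real.pi / 2) * (if x = y then 1 else 0)

/-- `P` is the law (on the canonical space `FieldSp`) of the Gaussian free field on `V_N`:
a centered Gaussian field with covariance the Green function `G_{V_N}`. -/
def IsGFF (N : ℕ) (P : MeasureTheory.Measure FieldSp) : Prop :=
  MeasureTheory.IsProbabilityMeasure P ∧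
  ∃ G : Vtx → Vtx → ℝ, IsGreenFn (VN N) G ∧
    ∀ c : Vtx → ℝ,
      P.map (fun ω => ∑ v ∈ VN N, c v * ω v) =
        ProbabilityTheory.gaussianReal 0 (Real.toNNReal (∑ v ∈ VN N, ∑ w ∈ VN N, c v * c w * G v w))

open MeasureTheory in
/-- `φ_v(λ) = E[φ_v | F_{∂[v]_λ ∪ [v]_λ^c}]`. -/
def phiScale (N : ℕ) (P : MeasureTheory.Measure FieldSp) (v : Vtx) (lam : ℝ) : FieldSp → ℝ :=
  P[fun ω : FieldSp => ω v | scaleAlg N lam v]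

/-- Admissible parameters `(σ,λ)`: `σ_1,…,σ_M > 0` and `0 = λ_0 < λ_1 < … < λ_M = 1`. -/
def ScaleParams (M : ℕ) (sigv lamv : ℕ → ℝ) : Prop :=
  1 ≤ M ∧ (∀ i ∈ Finset.Icc 1 M, 0 < sigv i) ∧
  lamv 0 = 0 ∧ lamv M = 1 ∧ ∀ i, i < M → lamv i < lamv (i + 1)

/-- The `(σ,λ)`-GFF: `ψ_v = Σ_{i=1}^M σ_i (φ_v(λ_i) − φ_v(λ_{i−1}))`. -/
def psiFld (N M : ℕ) (sigv lamv : ℕ → ℝ) (P : MeasureTheory.Measure FieldSp) (v : Vtx) : FieldSp → ℝ :=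
  fun ω => ∑ i ∈ Finset.Icc 1 M, sigv i * (phiScale N P v (lamv i) ω - phiScale N P v (lamv (i - 1)) ω)

open MeasureTheory in
/-- `ψ_v(λ) = E[ψ_v | F_{∂[v]_λ ∪ [v]_λ^c}]`. -/
def psiScale (N M : ℕ) (sigv lamv : ℕ → ℝ) (P : MeasureTheory.Measure FieldSp) (v : Vtx) (lam : ℝ) :
    FieldSp → ℝ :=
  P[psiFld N M sigv lamv P v | scaleAlg N lam v]

/-- The increment `ψ_v(λ,λ') = ψ_v(λ') − ψ_v(λ)`. -/
def psiInc (N M : ℕ) (sigv lamv : ℕ → ℝ) (P : MeasureTheory.Measure FieldSp) (v : Vtx) (lam lam' : ℝ) :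
    FieldSp → ℝ :=
  fun ω => psiScale N M sigv lamv P v lam' ω - psiScale N M sigv lamv P v lam ω

/-- The step function `σ(s) = σ_1 1_{{0}}(s) + Σ_{i=1}^M σ_i 1_{(λ_{i−1},λ_i]}(s)`. -/
def stepFn (M : ℕ) (sigv lamv : ℕ → ℝ) (s : ℝ) : ℝ :=
  (if s = 0 then sigv 1 else 0) +
  ∑ i ∈ Finset.Icc 1 M, if lamv (i - 1) < s ∧ s ≤ lamv i then sigv i else 0

/-- `𝒥_f(s) = ∫_0^s f(r) dr`. -/
def Jint (f : ℝ → ℝ) (s : ℝ) : ℝ := ∫ r in (0:ℝ)..s, f r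

/-- `𝒥_f(s₁,s₂) = ∫_{s₁}^{s₂} f(r) dr`. -/
def Jint2 (f : ℝ → ℝ) (s₁ s₂ : ℝ) : ℝ := ∫ r in s₁..s₂, f r

/-- The speed function `𝒥_{σ²}`. -/
def Jsig2 (M : ℕ) (sigv lamv : ℕ → ℝ) (s : ℝ) : ℝ := Jint (fun r => (stepFn M sigv lamv r) ^ 2) s

/-- The normalized speed function `𝒥̄_{σ²} = 𝒥_{σ²}/𝒥_{σ²}(1)`. -/
def JsigBar (M : ℕ) (sigv lamv : ℕ → ℝ) (s : ℝ) : ℝ := Jsig2 M sigv lamv s / Jsig2 M sigv lamv 1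

/-- The concave hull on `[0,1]` of a function `f`, i.e. the pointwise infimum over all
concave functions dominating `f` on `[0,1]`. -/
def concaveHull (f : ℝ → ℝ) (s : ℝ) : ℝ :=
  sInf {y | ∃ g : ℝ → ℝ, ConcaveOn ℝ (Set.Icc (0:ℝ) 1) g ∧
    (∀ t ∈ Set.Icc (0:ℝ) 1, f t ≤ g t) ∧ y = g s}

/-- The effective parameters: jump scales `0 = λ⁰ < … < λ^m = 1`, values
`σ̄_1 > … > σ̄_m > 0`, and the left-continuous non-increasing step function `σ̄`
such that `∫_0^s σ̄²` is the concavification of `𝒥_{σ²}`. -/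
def EffParams (M : ℕ) (sigv lamv : ℕ → ℝ) (m : ℕ) (sigb lamb : ℕ → ℝ) (sigbar : ℝ → ℝ) : Prop :=
  1 ≤ m ∧ m ≤ M ∧ lamb 0 = 0 ∧ lamb m = 1 ∧ (∀ j, j < m → lamb j < lamb (j + 1)) ∧
  (∀ l, 1 ≤ l → l < m → sigb (l + 1) < sigb l) ∧ (∀ l ∈ Finset.Icc 1 m, 0 < sigb l) ∧
  sigbar 0 = sigb 1 ∧
  (∀ l ∈ Finset.Icc 1 m, ∀ s : ℝ, lamb (l - 1) < s → s ≤ lamb l → sigbar s = sigb l) ∧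
  (∀ s : ℝ, 0 < s → s ≤ 1 →
    concaveHull (Jsig2 M sigv lamv) s = ∫ r in (0:ℝ)..s, (sigbar r) ^ 2)

/-- `γ* = 𝒥_{σ²/σ̄}(1)`. -/
def gammaStar (M : ℕ) (sigv lamv : ℕ → ℝ) (sigbar : ℝ → ℝ) : ℝ :=
  ∫ s in (0:ℝ)..1, (stepFn M sigv lamv s) ^ 2 / sigbar s

/-- The critical levels `γ^l = ∫_0^1 σ²(s)/σ̄(s ∧ λ^l) ds`, `γ⁰ = 0`. -/
def gammaL (M : ℕ) (sigv lamv : ℕ → ℝ) (lamb : ℕ → ℝ) (sigbar : ℝ → ℝ) (l : ℕ) : ℝ :=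
  if l = 0 then 0 else ∫ s in (0:ℝ)..1, (stepFn M sigv lamv s) ^ 2 / sigbar (min s (lamb l))

/-- `EntE` is the entropy function `𝓔` of the model. -/
def IsEntropy (M : ℕ) (sigv lamv : ℕ → ℝ) (m : ℕ) (lamb : ℕ → ℝ) (sigbar : ℝ → ℝ)
    (EntE : ℝ → ℝ) : Prop :=
  EntE 0 = 1 ∧
  ∀ l ∈ Finset.Icc 1 m, ∀ γ : ℝ,
    gammaL M sigv lamv lamb sigbar (l - 1) < γ → γ ≤ gammaL M sigv lamv lamb sigbar l →
      EntE γ = (1 - lamb (l - 1)) -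
        (γ - ∫ s in (0:ℝ)..(lamb (l - 1)), (stepFn M sigv lamv s) ^ 2 / sigbar s) ^ 2 /
          Jint2 (fun r => (stepFn M sigv lamv r) ^ 2) (lamb (l - 1)) 1

/-- The limiting free energy of the `REM(σ)` model. -/
def fREM (σ β : ℝ) : ℝ :=
  if (2 / σ) < β then 2 * (β / (2 / σ)) else 1 + (β / (2 / σ)) ^ 2

/-- The index `l_β`. -/
def lbeta (m : ℕ) (sigb : ℕ → ℝ) (β : ℝ) : ℕ :=
  if β ≤ 2 / sigb m then sInf {l : ℕ | 1 ≤ l ∧ β ≤ 2 / sigb l} else m + 1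

/-- The limiting free energy `f^ψ(β)`, written with the `l_β` split. -/
def fpsiLim (m : ℕ) (sigb lamb : ℕ → ℝ) (β : ℝ) : ℝ :=
  (∑ j ∈ Finset.Icc 1 (lbeta m sigb β - 1), (2 * β / (2 / sigb j)) * (lamb j - lamb (j - 1))) +
  ∑ j ∈ Finset.Icc (lbeta m sigb β) m, (1 + β ^ 2 / (2 / sigb j) ^ 2) * (lamb j - lamb (j - 1))

/-- The set `ℬ` of non-critical inverse temperatures. -/
def critSet (m : ℕ) (sigb : ℕ → ℝ) : Set ℝ :=
  {β | 0 < β ∧ ∀ j ∈ Finset.Icc 1 m, β ≠ 2 / sigb j}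

/-- The partition function `Z_N^ψ(β)`. -/
def ZN (N M : ℕ) (sigv lamv : ℕ → ℝ) (P : MeasureTheory.Measure FieldSp) (β : ℝ) (ω : FieldSp) : ℝ :=
  ∑ v ∈ VN N, Real.exp (β * psiFld N M sigv lamv P v ω)

/-- The free energy `f_N^ψ(β)` on `V_N`. -/
def freeEnergy (N M : ℕ) (sigv lamv : ℕ → ℝ) (P : MeasureTheory.Measure FieldSp) (β : ℝ) (ω : FieldSp) : ℝ :=
  (Real.log ((N : ℝ) ^ 2))⁻¹ * Real.log (ZN N M sigv lamv P β ω)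

/-- The set `A_{N,ρ}` of points at distance at least `N^{1−ρ}` from `ℤ² ∖ V_N`. -/
def AN (N : ℕ) (ρ : ℝ) : Finset Vtx :=
  (VN N).filter fun v => ∀ z : Vtx, z ∉ VN N →
    (N : ℝ) ^ ((1 : ℝ) - ρ) ≤ Real.sqrt (((v.1 : ℝ) - (z.1 : ℝ)) ^ 2 + ((v.2 : ℝ) - (z.2 : ℝ)) ^ 2)

/-- The restricted partition function `Z_{N,ρ}^ψ(β)`. -/
def ZNres (N M : ℕ) (sigv lamv : ℕ → ℝ) (P : MeasureTheory.Measure FieldSp) (β ρ : ℝ) (ω : FieldSp) : ℝ :=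
  ∑ v ∈ AN N ρ, Real.exp (β * psiFld N M sigv lamv P v ω)

/-- The free energy `f_{N,ρ}^ψ(β)` on `A_{N,ρ}`. -/
def freeEnergyRes (N M : ℕ) (sigv lamv : ℕ → ℝ) (P : MeasureTheory.Measure FieldSp) (β ρ : ℝ)
    (ω : FieldSp) : ℝ :=
  (Real.log ((N : ℝ) ^ 2))⁻¹ * Real.log (ZNres N M sigv lamv P β ρ ω)

/-- The Gibbs weight `𝒢_{β,N}({v})`. -/
def gibbsW (N M : ℕ) (sigv lamv : ℕ → ℝ) (P : MeasureTheory.Measure FieldSp) (β : ℝ) (v : Vtx)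
    (ω : FieldSp) : ℝ :=
  Real.exp (β * psiFld N M sigv lamv P v ω) / ZN N M sigv lamv P β ω

/-- The restricted Gibbs weight `𝒢_{β,N,ρ}({v})`. -/
def gibbsWres (N M : ℕ) (sigv lamv : ℕ → ℝ) (P : MeasureTheory.Measure FieldSp) (β ρ : ℝ) (v : Vtx)
    (ω : FieldSp) : ℝ :=
  Real.exp (β * psiFld N M sigv lamv P v ω) / ZNres N M sigv lamv P β ρ ω

/-- `E𝒢_{β,N}^{×s}[F]`: the mean over the disorder of the `s`-fold Gibbs average of `F`. -/
def gibbsExp (N M : ℕ) (sigv lamv : ℕ → ℝ) (P : MeasureTheory.Measure FieldSp) (β : ℝ) (s : ℕ)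
    (F : (Fin s → Vtx) → ℝ) : ℝ :=
  ∫ ω, (∑ vv ∈ Fintype.piFinset (fun _ : Fin s => VN N),
    (∏ i, gibbsW N M sigv lamv P β (vv i) ω) * F vv) ∂P

/-- `E𝒢_{β,N,ρ}^{×s}[F]`, with an `ω`-dependent integrand allowed. -/
def gibbsExpRes (N M : ℕ) (sigv lamv : ℕ → ℝ) (P : MeasureTheory.Measure FieldSp) (β ρ : ℝ) (s : ℕ)
    (F : (Fin s → Vtx) → FieldSp → ℝ) : ℝ :=
  ∫ ω, (∑ vv ∈ Fintype.piFinset (fun _ : Fin s => AN N ρ),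
    (∏ i, gibbsWres N M sigv lamv P β ρ (vv i) ω) * F vv ω) ∂P

/-- `E𝒢_{β,N}^{×s}[F]`, with an `ω`-dependent integrand allowed. -/
def gibbsExpW (N M : ℕ) (sigv lamv : ℕ → ℝ) (P : MeasureTheory.Measure FieldSp) (β : ℝ) (s : ℕ)
    (F : (Fin s → Vtx) → FieldSp → ℝ) : ℝ :=
  ∫ ω, (∑ vv ∈ Fintype.piFinset (fun _ : Fin s => VN N),
    (∏ i, gibbsW N M sigv lamv P β (vv i) ω) * F vv ω) ∂P

/-- The covariance `E[ψ_v ψ_{v'}]`. -/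
def psiCov (N M : ℕ) (sigv lamv : ℕ → ℝ) (P : MeasureTheory.Measure FieldSp) (v v' : Vtx) : ℝ :=
  ∫ ω, psiFld N M sigv lamv P v ω * psiFld N M sigv lamv P v' ω ∂P

/-- `C₀` is a constant witnessing the uniform variance upper bound
`max_{v∈V_N} E[ψ_v²] ≤ 𝒥_{σ²}(1) log N + C₀` for `N` large. -/
def IsVarBound (M : ℕ) (sigv lamv : ℕ → ℝ) (P : ℕ → MeasureTheory.Measure FieldSp) (C₀ : ℝ) : Prop :=
  0 < C₀ ∧ ∃ N₀ : ℕ, ∀ N ≥ N₀, ∀ v ∈ VN N,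
    psiCov N M sigv lamv (P N) v v ≤ Jsig2 M sigv lamv 1 * Real.log N + C₀

/-- The overlap `q^N(v,v')`. -/
def overlapQ (N M : ℕ) (sigv lamv : ℕ → ℝ) (P : MeasureTheory.Measure FieldSp) (C₀ : ℝ) (v v' : Vtx) : ℝ :=
  psiCov N M sigv lamv P v v' / (Jsig2 M sigv lamv 1 * Real.log N + C₀)

/-- Convergence in probability to a constant, for a sequence of random variables on a
sequence of probability spaces. -/
def TendstoInProb (P : ℕ → MeasureTheory.Measure FieldSp) (X : ℕ → FieldSp → ℝ) (c : ℝ) : Prop :=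
  ∀ ε : ℝ, 0 < ε → Tendsto (fun N => P N {ω | ε < |X N ω - c|}) atTop (nhds 0)

/-- Convergence in `L^p` to a constant. -/
def TendstoLp (P : ℕ → MeasureTheory.Measure FieldSp) (X : ℕ → FieldSp → ℝ) (p c : ℝ) : Prop :=
  Tendsto (fun N => ∫ ω, |X N ω - c| ^ p ∂(P N)) atTop (nhds 0)

/-- The branching scale `b_N(v,v')`. -/
def bScale (N : ℕ) (v v' : Vtx) : ℝ :=
  sSup {lam : ℝ | lam ∈ Set.Icc (0:ℝ) 1 ∧ ((nbhd N lam v) ∩ (nbhd N lam v')).Nonempty}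

end GFFCommon

section GFFProof
open MeasureTheory ProbabilityTheory

/-- The logarithmic barrier. -/
noncomputable def barr (y x : Vtx) : ℝ :=
  Real.log (1 + ((x.1 : ℝ) - y.1) ^ 2 + ((x.2 : ℝ) - y.2) ^ 2)

lemma poly_aux (a b : ℝ) :
    (1 + a ^ 2 + b ^ 2) ^ 4 ≤
      (1 + (a + 1) ^ 2 + b ^ 2) * (1 + (a - 1) ^ 2 + b ^ 2) *
      ((1 + a ^ 2 + (b + 1) ^ 2) * (1 + a ^ 2 + (b - 1) ^ 2)) := by
  have h : (1 + (a + 1) ^ 2 + b ^ 2) * (1 + (a - 1) ^ 2 + b ^ 2) *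
      ((1 + a ^ 2 + (b + 1) ^ 2) * (1 + a ^ 2 + (b - 1) ^ 2)) - (1 + a ^ 2 + b ^ 2) ^ 4
      = 2 * (a^2+b^2+2)^2 + 4 * (a^2+b^2+2) - 1 + 16 * (a^2 * b^2) := by ring
  have h1 : 0 ≤ a^2 * b^2 := by positivity
  have h2 : 0 ≤ a^2 + b^2 := by positivity
  nlinarith

lemma barr_sub (y x : Vtx) :
    barr y x + (if x = y then Real.log 2 else 0) ≤ (barr y (x.1 + 1, x.2) + barr y (x.1 - 1, x.2)
      + barr y (x.1, x.2 + 1) + barr y (x.1, x.2 - 1)) / 4 := by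
  by_cases hxy : x = y
  · subst hxy
    simp only [barr]
    push_cast
    norm_num
    ring_nf
    exact le_refl _
  · rw [if_neg hxy]
    simp only [barr]
    push_cast
    set a : ℝ := (x.1 : ℝ) - y.1 with ha
    set b : ℝ := (x.2 : ℝ) - y.2 with hb
    have e1 : (x.1 : ℝ) + 1 - y.1 = a + 1 := by rw [ha]; ring
    have e2 : (x.1 : ℝ) - 1 - y.1 = a - 1 := by rw [ha]; ring
    have e3 : (x.2 : ℝ) + 1 - y.2 = b + 1 := by rw [hb]; ring
    have e4 : (x.2 : ℝ) - 1 - y.2 = b - 1 := by rw [hb]; ring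
    rw [e1, e2, e3, e4]
    have h := Real.log_le_log (by positivity) (poly_aux a b)
    rw [Real.log_mul (by positivity) (by positivity), Real.log_mul (by positivity) (by positivity),
      Real.log_mul (by positivity) (by positivity), Real.log_pow] at h
    push_cast at h
    linarith

lemma mem_intr_nbrs {B : Finset Vtx} {x : Vtx} (hx : x ∈ intr B) :
    x ∈ B ∧ (x.1 + 1, x.2) ∈ B ∧ (x.1 - 1, x.2) ∈ B ∧ (x.1, x.2 + 1) ∈ B ∧ (x.1, x.2 - 1) ∈ B := by
  simp only [intr, bdry, Finset.mem_sdiff, Finset.mem_filter, not_and] at hx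
  refine ⟨hx.1, ?_⟩
  have := hx.2 hx.1
  tauto

lemma max_principle (B : Finset Vtx) (u : Vtx → ℝ)
    (hout : ∀ x ∈ B, x ∉ intr B → u x ≤ 0)
    (hin : ∀ x ∈ intr B, u x ≤ (u (x.1 + 1, x.2) + u (x.1 - 1, x.2)
        + u (x.1, x.2 + 1) + u (x.1, x.2 - 1)) / 4) :
    ∀ x ∈ B, u x ≤ 0 := by
  intro x0 hx0
  by_contra! hpos
  obtain ⟨m, hmB, hm⟩ := B.exists_max_image u ⟨x0, hx0⟩
  have hmpos : 0 < u m := hpos.trans_le (hm x0 hx0)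
  obtain ⟨z, hz, hzmax⟩ := (B.filter fun x => u x = u m).exists_max_image (fun x => x.1)
    ⟨m, by simp [hmB]⟩
  rw [Finset.mem_filter] at hz
  have hzin : z ∈ intr B := by
    by_contra hh
    have := hout z hz.1 hh
    linarith [hz.2]
  obtain ⟨-, h1, h2, h3, h4⟩ := mem_intr_nbrs hzin
  have k := hin z hzin
  have k1 := hm _ h1
  have k2 := hm _ h2
  have k3 := hm _ h3
  have k4 := hm _ h4
  have e : u (z.1 + 1, z.2) = u m := by
    apply le_antisymm k1
    linarith [hz.2]
  have := hzmax (z.1 + 1, z.2) (by simp [h1, e])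
  simp at this

lemma mem_VN {N : ℕ} {x : Vtx} : x ∈ VN N ↔ (0 ≤ x.1 ∧ 0 ≤ x.2) ∧ x.1 ≤ N ∧ x.2 ≤ N := by
  simp [VN, Finset.mem_Icc, Prod.le_def]

lemma green_diag_le {N : ℕ} {G : Vtx → Vtx → ℝ} (hG : IsGreenFn (VN N) G) {y : Vtx}
    (hy : y ∈ VN N) :
    G y y ≤ (Real.pi / 2) / Real.log 2 * Real.log (1 + 2 * (N : ℝ) ^ 2) := by
  have hl2 : 0 < Real.log 2 := Real.log_pos (by norm_num)
  set c : ℝ := (Real.pi / 2) / Real.log 2 with hc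
  have hcpos : 0 < c := by have := Real.pi_pos; positivity
  set R := Real.log (1 + 2 * (N : ℝ) ^ 2) with hR
  have hRn : 0 ≤ R := Real.log_nonneg (by nlinarith [sq_nonneg (N : ℝ)])
  by_cases hyi : y ∈ intr (VN N)
  swap
  · rw [hG.1 y y (Or.inl hyi)]; positivity
  have hle : ∀ x ∈ VN N, barr y x ≤ R := by
    intro x hx
    rw [mem_VN] at hx hy
    apply Real.log_le_log (by positivity)
    have h1 : ((x.1 : ℝ) - y.1) ^ 2 ≤ (N : ℝ) ^ 2 := by
      apply sq_le_sq'
      · have : (-(N : ℤ) : ℤ) ≤ x.1 - y.1 := by omega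
        exact_mod_cast this
      · have : x.1 - y.1 ≤ (N : ℤ) := by omega
        exact_mod_cast this
    have h2 : ((x.2 : ℝ) - y.2) ^ 2 ≤ (N : ℝ) ^ 2 := by
      apply sq_le_sq'
      · have : (-(N : ℤ) : ℤ) ≤ x.2 - y.2 := by omega
        exact_mod_cast this
      · have : x.2 - y.2 ≤ (N : ℤ) := by omega
        exact_mod_cast this
    linarith
  have key := max_principle (VN N) (fun x => G x y - c * (R - barr y x)) ?_ ?_ y hy
  · have : barr y y = 0 := by simp [barr]
    rw [this] at key
    linarith
  · intro x hx hxi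
    rw [hG.1 x y (Or.inl hxi)]
    have := mul_nonneg hcpos.le (sub_nonneg.2 (hle x hx))
    linarith
  · intro x hx
    have h1 := hG.2 y hyi x hx
    have h2 := mul_le_mul_of_nonneg_left (barr_sub y x) hcpos.le
    have h3 : c * (if x = y then Real.log 2 else 0) = (Real.pi / 2) * (if x = y then 1 else 0) := by
      split_ifs
      · rw [hc]; field_simp
      · simp
    rw [mul_add, h3] at h2
    linarith

lemma gff_law {N : ℕ} {P : Measure FieldSp} {G : Vtx → Vtx → ℝ}
    (h : ∀ c : Vtx → ℝ,
      P.map (fun ω => ∑ v ∈ VN N, c v * ω v) =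
        gaussianReal 0 (Real.toNNReal (∑ v ∈ VN N, ∑ w ∈ VN N, c v * c w * G v w)))
    {y : Vtx} (hy : y ∈ VN N) :
    P.map (fun ω => ω y) = gaussianReal 0 (Real.toNNReal (G y y)) := by
  have := h (fun v => if v = y then 1 else 0)
  simpa [hy] using this

lemma scaleAlg_le (N : ℕ) (lam : ℝ) (v : Vtx) :
    scaleAlg N lam v ≤ (inferInstance : MeasurableSpace FieldSp) := by
  refine iSup₂_le fun w _ => ?_
  exact (measurable_pi_apply w).comap_le

lemma exp_phi {P : Measure FieldSp} [IsProbabilityMeasure P] {y : Vtx} {V : NNReal}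
    (h : P.map (fun ω => ω y) = gaussianReal 0 V) (t : ℝ) :
    Integrable (fun ω : FieldSp => ω y) P ∧
    Integrable (fun ω : FieldSp => Real.exp (t * ω y)) P ∧
      ∫ ω, Real.exp (t * ω y) ∂P = Real.exp (V * t ^ 2 / 2) := by
  have hm : Measurable (fun ω : FieldSp => ω y) := measurable_pi_apply y
  refine ⟨?_, ?_, ?_⟩
  · have : Integrable (fun x : ℝ => x) (P.map (fun ω => ω y)) := by
      rw [h]
      exact (memLp_id_gaussianReal 1).integrable le_rfl
    exact this.comp_measurable hm
  · have : Integrable (fun x : ℝ => Real.exp (t * x)) (P.map (fun ω => ω y)) := by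
      rw [h]
      exact integrable_exp_mul_gaussianReal t
    exact this.comp_measurable hm
  · have := mgf_gaussianReal h t
    simpa [mgf] using this

lemma exp_phiScale {N : ℕ} {P : Measure FieldSp} [IsProbabilityMeasure P] {y : Vtx} {V : NNReal}
    (h : P.map (fun ω => ω y) = gaussianReal 0 V) (lam t : ℝ) :
    Integrable (fun ω : FieldSp => Real.exp (t * phiScale N P y lam ω)) P ∧
      ∫ ω, Real.exp (t * phiScale N P y lam ω) ∂P ≤ Real.exp (V * t ^ 2 / 2) := by
  obtain ⟨h1, h2, h3⟩ := exp_phi h t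
  have hle := scaleAlg_le N lam y
  have hcv : ConvexOn ℝ Set.univ (fun x : ℝ => Real.exp (t * x)) := by
    have := convexOn_exp.comp_linearMap (LinearMap.mul ℝ ℝ t)
    simpa [Function.comp_def] using this
  have hJ := ConvexOn.map_condExp_le_univ (μ := P) (f := fun ω : FieldSp => ω y) hle hcv
    (by fun_prop : Continuous fun x : ℝ => Real.exp (t * x)).lowerSemicontinuous h1 h2
  have hJ' : ∀ᵐ ω ∂P, Real.exp (t * phiScale N P y lam ω) ≤
    (P[fun ω : FieldSp => Real.exp (t * ω y) | scaleAlg N lam y]) ω := hJ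
  have hint : Integrable (fun ω : FieldSp => Real.exp (t * phiScale N P y lam ω)) P := by
    refine Integrable.mono' (g := P[fun ω : FieldSp => Real.exp (t * ω y) | scaleAlg N lam y])
      integrable_condExp ?_ (hJ'.mono fun ω hω => ?_)
    · have : AEStronglyMeasurable (phiScale N P y lam) P :=
        (integrable_condExp (μ := P)).aestronglyMeasurable
      exact (by fun_prop : Continuous fun x : ℝ => Real.exp (t * x)).comp_aestronglyMeasurable this
    · rw [Real.norm_eq_abs, abs_of_pos (Real.exp_pos _)]
      exact hω
  refine ⟨hint, ?_⟩
  calc _ ≤ ∫ ω, (P[fun ω : FieldSp => Real.exp (t * ω y) | scaleAlg N lam y]) ω ∂P :=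
        integral_mono_ae hint integrable_condExp hJ'
    _ = _ := by rw [integral_condExp hle, h3]

lemma exp_sum_le {ι : Type*} (s : Finset ι) (hs : s.Nonempty) (b : ι → ℝ) :
    Real.exp (∑ i ∈ s, b i) ≤ ∑ i ∈ s, Real.exp (s.card * b i) := by
  obtain ⟨m, hm, hmax⟩ := s.exists_max_image b hs
  have : ∑ i ∈ s, b i ≤ s.card * b m := by
    have := Finset.sum_le_card_nsmul s b (b m) hmax
    simpa using this
  calc _ ≤ Real.exp (s.card * b m) := Real.exp_le_exp.2 this
    _ ≤ _ := Finset.single_le_sum (f := fun i => Real.exp (s.card * b i))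
        (fun i _ => (Real.exp_pos _).le) hm

lemma exp_psi {N M : ℕ} (hM : 1 ≤ M) {sigv lamv : ℕ → ℝ} {P : Measure FieldSp}
    [IsProbabilityMeasure P] {y : Vtx} {V : NNReal} {β K : ℝ}
    (hK : ∀ i ∈ Finset.Icc 1 M, (2 * M * β * sigv i) ^ 2 ≤ K)
    (h : P.map (fun ω => ω y) = gaussianReal 0 V) :
    Integrable (fun ω : FieldSp => Real.exp (β * psiFld N M sigv lamv P y ω)) P ∧
      ∫ ω, Real.exp (β * psiFld N M sigv lamv P y ω) ∂P ≤ 2 * M * Real.exp (V * K / 2) := by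
  set F : ℕ → FieldSp → ℝ := fun i ω =>
    Real.exp ((2 * M * β * sigv i) * phiScale N P y (lamv i) ω) +
      Real.exp ((-(2 * M * β * sigv i)) * phiScale N P y (lamv (i - 1)) ω) with hF
  have hFi : ∀ i, Integrable (F i) P := fun i =>
    (exp_phiScale h (lamv i) _).1.add (exp_phiScale h (lamv (i - 1)) _).1
  have hFb : ∀ i ∈ Finset.Icc 1 M, ∫ ω, F i ω ∂P ≤ 2 * Real.exp (V * K / 2) := by
    intro i hi
    have e : ∫ ω, F i ω ∂P = _ :=
      integral_add (exp_phiScale (N := N) h (lamv i) (2 * M * β * sigv i)).1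
        (exp_phiScale (N := N) h (lamv (i - 1)) (-(2 * M * β * sigv i))).1
    have a1 := (exp_phiScale (N := N) h (lamv i) (2 * M * β * sigv i)).2
    have a2 := (exp_phiScale (N := N) h (lamv (i - 1)) (-(2 * M * β * sigv i))).2
    rw [neg_sq] at a2
    have a3 : Real.exp (V * (2 * M * β * sigv i) ^ 2 / 2) ≤ Real.exp (V * K / 2) := by
      apply Real.exp_le_exp.2
      have := mul_le_mul_of_nonneg_left (hK i hi) V.2
      have h' : (V : ℝ) * (2 * M * β * sigv i) ^ 2 ≤ V * K := this
      linarith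
    rw [e]
    linarith
  have hpt : ∀ ω, Real.exp (β * psiFld N M sigv lamv P y ω) ≤ ∑ i ∈ Finset.Icc 1 M, F i ω := by
    intro ω
    simp only [psiFld]
    rw [Finset.mul_sum]
    refine (exp_sum_le _ ⟨1, by simp [hM]⟩ _).trans (Finset.sum_le_sum fun i _ => ?_)
    simp only [Nat.card_Icc, Nat.add_sub_cancel, hF]
    set A := phiScale N P y (lamv i) ω
    set B := phiScale N P y (lamv (i - 1)) ω
    set r := Real.exp (M * β * sigv i * A)
    set q := Real.exp (-(M * β * sigv i) * B)
    have e1 : Real.exp (M * (β * (sigv i * (A - B)))) = r * q := by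
      rw [← Real.exp_add]; congr 1; ring
    have e2 : Real.exp (2 * M * β * sigv i * A) = r * r := by
      rw [← Real.exp_add]; congr 1; ring
    have e3 : Real.exp (-(2 * M * β * sigv i) * B) = q * q := by
      rw [← Real.exp_add]; congr 1; ring
    rw [e1, e2, e3]
    nlinarith [sq_nonneg (r - q), sq_nonneg (r + q)]
  have hsi : Integrable (fun ω => ∑ i ∈ Finset.Icc 1 M, F i ω) P :=
    integrable_finsetSum _ fun i _ => hFi i
  have hint : Integrable (fun ω : FieldSp => Real.exp (β * psiFld N M sigv lamv P y ω)) P := by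
    refine Integrable.mono' hsi ?_ (ae_of_all _ fun ω => ?_)
    · have hψ : AEStronglyMeasurable (psiFld N M sigv lamv P y) P := by
        have : Integrable (psiFld N M sigv lamv P y) P :=
          integrable_finsetSum _ fun i _ =>
            ((integrable_condExp (μ := P)).sub (integrable_condExp (μ := P))).const_mul _
        exact this.aestronglyMeasurable
      exact (by fun_prop : Continuous fun x : ℝ => Real.exp (β * x)).comp_aestronglyMeasurable hψ
    · rw [Real.norm_eq_abs, abs_of_pos (Real.exp_pos _)]
      exact hpt ω
  refine ⟨hint, ?_⟩
  calc _ ≤ ∫ ω, ∑ i ∈ Finset.Icc 1 M, F i ω ∂P := integral_mono hint hsi hpt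
    _ = ∑ i ∈ Finset.Icc 1 M, ∫ ω, F i ω ∂P := integral_finsetSum _ fun i _ => hFi i
    _ ≤ ∑ i ∈ Finset.Icc 1 M, 2 * Real.exp (V * K / 2) := Finset.sum_le_sum hFb
    _ = _ := by simp; ring

lemma psi_corner {N M : ℕ} {sigv lamv : ℕ → ℝ} {P : Measure FieldSp} (hP : IsGFF N P) :
    ∀ᵐ ω ∂P, psiFld N M sigv lamv P (0, 0) ω = 0 := by
  obtain ⟨hprob, G, hG, hlaw⟩ := hP
  have h0 : ((0, 0) : Vtx) ∈ VN N := by rw [mem_VN]; simp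
  have h0i : ((0, 0) : Vtx) ∉ intr (VN N) := by
    intro h
    have := (mem_intr_nbrs h).2.2.1
    rw [mem_VN] at this
    simp at this
  have hl := gff_law hlaw h0
  rw [hG.1 _ _ (Or.inl h0i), Real.toNNReal_zero, gaussianReal_zero_var] at hl
  have hz : (fun ω : FieldSp => ω (0, 0)) =ᵐ[P] 0 := by
    have h1 : ∀ᵐ x ∂(P.map (fun ω : FieldSp => ω (0, 0))), x = 0 := by
      rw [hl, ae_dirac_iff (by measurability)]
    exact ae_of_ae_map (measurable_pi_apply _).aemeasurable h1
  have hphi : ∀ lam, phiScale N P (0, 0) lam =ᵐ[P] 0 := by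
    intro lam
    have := condExp_congr_ae (m := scaleAlg N lam (0, 0)) hz
    rw [condExp_zero] at this
    exact this
  have hall : ∀ᵐ ω ∂P, ∀ i, phiScale N P (0, 0) (lamv i) ω = 0 :=
    ae_all_iff.2 fun i => hphi (lamv i)
  filter_upwards [hall] with ω hω
  simp [psiFld, hω]

lemma ZN_bound (M : ℕ) (sigv lamv : ℕ → ℝ) (hM : 1 ≤ M) (β : ℝ) :
    ∃ C : ℝ, 0 ≤ C ∧ ∀ N : ℕ, 2 ≤ N → ∀ P : Measure FieldSp, IsGFF N P →
      Integrable (ZN N M sigv lamv P β) P ∧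
      ∫ ω, ZN N M sigv lamv P β ω ∂P ≤ Real.exp (C * Real.log ((N : ℝ) ^ 2)) := by
  set K : ℝ := ∑ i ∈ Finset.Icc 1 M, (2 * M * β * sigv i) ^ 2 with hKdef
  have hK0 : 0 ≤ K := Finset.sum_nonneg fun i _ => sq_nonneg _
  have hK : ∀ i ∈ Finset.Icc 1 M, (2 * M * β * sigv i) ^ 2 ≤ K := fun i hi =>
    Finset.single_le_sum (f := fun i => (2 * M * β * sigv i) ^ 2) (fun i _ => sq_nonneg _) hi
  have hl2 : 0 < Real.log 2 := Real.log_pos (by norm_num)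
  set c : ℝ := (Real.pi / 2) / Real.log 2 with hc
  have hcpos : 0 < c := by have := Real.pi_pos; positivity
  refine ⟨2 + M + c * K, by positivity, fun N hN P hP => ?_⟩
  obtain ⟨hprob, G, hG, hlaw⟩ := hP
  have hN' : (2 : ℝ) ≤ N := by exact_mod_cast hN
  have hlogN : Real.log 2 ≤ Real.log N := Real.log_le_log (by norm_num) hN'
  have hR : Real.log (1 + 2 * (N : ℝ) ^ 2) ≤ 4 * Real.log N := by
    rw [show 4 * Real.log (N : ℝ) = Real.log ((N : ℝ) ^ 4) by rw [Real.log_pow]; norm_num]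
    apply Real.log_le_log (by positivity)
    nlinarith [mul_self_nonneg ((N : ℝ) ^ 2 - 4), mul_le_mul hN' hN' (by norm_num) (by linarith)]
  have hv : ∀ v ∈ VN N, Integrable (fun ω : FieldSp => Real.exp (β * psiFld N M sigv lamv P v ω)) P ∧
      ∫ ω, Real.exp (β * psiFld N M sigv lamv P v ω) ∂P
        ≤ 2 * M * Real.exp (2 * c * K * Real.log N) := by
    intro v hv
    obtain ⟨h1, h2⟩ := exp_psi (N := N) (lamv := lamv) hM hK (gff_law hlaw hv)
    refine ⟨h1, h2.trans ?_⟩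
    gcongr
    have hV : ((Real.toNNReal (G v v) : NNReal) : ℝ) ≤ c * (4 * Real.log N) := by
      rw [Real.coe_toNNReal']
      apply max_le
      · exact (green_diag_le hG hv).trans (mul_le_mul_of_nonneg_left hR hcpos.le)
      · have : 0 ≤ Real.log N := by linarith
        positivity
    have := mul_le_mul_of_nonneg_right hV hK0
    linarith
  refine ⟨integrable_finsetSum _ fun v hv' => (hv v hv').1, ?_⟩
  have hcard : ((VN N).card : ℝ) ≤ Real.exp (4 * Real.log N) := by
    have h1 : (VN N).card = (N + 1) * (N + 1) := by
      simp [VN, Finset.card_Icc_prod]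
    rw [h1, show 4 * Real.log (N : ℝ) = Real.log ((N : ℝ) ^ 4) by rw [Real.log_pow]; norm_num,
      Real.exp_log (by positivity)]
    push_cast
    have : (N : ℝ) + 1 ≤ (N : ℝ) ^ 2 := by nlinarith
    calc ((N : ℝ) + 1) * (N + 1) ≤ (N : ℝ) ^ 2 * (N : ℝ) ^ 2 := by gcongr
      _ = _ := by ring
  have hMM : (2 * M : ℝ) ≤ Real.exp (2 * M * Real.log N) := by
    have h1 : (2 * M : ℝ) ≤ (2 : ℝ) ^ (2 * M) := by
      have : 2 * M < 2 ^ (2 * M) := Nat.lt_two_pow_self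
      exact_mod_cast this.le
    have h2 : (2 : ℝ) ^ (2 * M) = Real.exp (2 * M * Real.log 2) := by
      rw [show (2 * M * Real.log 2 : ℝ) = Real.log ((2 : ℝ) ^ (2 * M)) by
        rw [Real.log_pow]; push_cast; ring, Real.exp_log (by positivity)]
    rw [h2] at h1
    refine h1.trans (Real.exp_le_exp.2 ?_)
    gcongr
  calc ∫ ω, ZN N M sigv lamv P β ω ∂P
      = ∑ v ∈ VN N, ∫ ω, Real.exp (β * psiFld N M sigv lamv P v ω) ∂P :=
        integral_finsetSum _ fun v hv' => (hv v hv').1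
    _ ≤ ∑ v ∈ VN N, 2 * M * Real.exp (2 * c * K * Real.log N) :=
        Finset.sum_le_sum fun v hv' => (hv v hv').2
    _ = (VN N).card * (2 * M * Real.exp (2 * c * K * Real.log N)) := by simp
    _ ≤ Real.exp (4 * Real.log N) * (Real.exp (2 * M * Real.log N) *
          Real.exp (2 * c * K * Real.log N)) := by gcongr
    _ = _ := by
      rw [← Real.exp_add, ← Real.exp_add, Real.log_pow]
      congr 1
      push_cast
      ring

lemma rpow_le_exp_aux (p : ℝ) (hp : 1 ≤ p) :
    ∃ D : ℝ, 0 < D ∧ ∀ x : ℝ, 0 ≤ x → (x ^ p) ^ 2 ≤ D * Real.exp x := by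
  set n := ⌈2 * p⌉₊ with hn
  refine ⟨1 + (n.factorial : ℝ), by positivity, fun x hx => ?_⟩
  have e1 : 1 ≤ Real.exp x := Real.one_le_exp hx
  have e2 : x ^ n ≤ n.factorial * Real.exp x := by
    have := Real.pow_div_factorial_le_exp x hx n
    rwa [div_le_iff₀' (by positivity)] at this
  have e3 : (x ^ p) ^ 2 = x ^ (2 * p) := by
    rw [mul_comm, Real.rpow_mul hx]; norm_num
  rw [e3]
  rcases le_total x 1 with h | h
  · have : x ^ (2 * p) ≤ 1 := Real.rpow_le_one hx h (by linarith)
    nlinarith [Real.exp_pos x, (Nat.cast_nonneg n.factorial : (0:ℝ) ≤ n.factorial)]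
  · have : x ^ (2 * p) ≤ x ^ (n : ℝ) := Real.rpow_le_rpow_of_exponent_le h (Nat.le_ceil _)
    rw [Real.rpow_natCast] at this
    linarith

end GFFProof

/-- **Lemma (Uniform integrability of `{|f_N^ψ(β)|^p}_N`).**
For every `β > 0` and `1 ≤ p < ∞`,
`lim_{α→∞} sup_{N∈ℕ} E[|f_N^ψ(β)|^p · 1_{{|f_N^ψ(β)|^p > α}}] = 0`. -/
theorem free_energy_uniformly_integrable
    (M : ℕ) (sigv lamv : ℕ → ℝ) (hparams : ScaleParams M sigv lamv)
    (P : ℕ → MeasureTheory.Measure FieldSp) (hGFF : ∀ N, IsGFF N (P N))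
    (β p : ℝ) (hβ : 0 < β) (hp : 1 ≤ p) :
    Filter.Tendsto (fun α : ℝ => ⨆ N : ℕ,
        ∫ ω, |freeEnergy N M sigv lamv (P N) β ω| ^ p *
          (if α < |freeEnergy N M sigv lamv (P N) β ω| ^ p then (1 : ℝ) else 0) ∂(P N))
      Filter.atTop (nhds 0) := by
  obtain ⟨C, hC, hZ⟩ := ZN_bound M sigv lamv hparams.1 β
  obtain ⟨D, hD, hDx⟩ := rpow_le_exp_aux p hp
  have hbound : ∀ α : ℝ, 0 < α → ∀ N : ℕ,
      ∫ ω, |freeEnergy N M sigv lamv (P N) β ω| ^ p *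
          (if α < |freeEnergy N M sigv lamv (P N) β ω| ^ p then (1 : ℝ) else 0) ∂(P N)
        ≤ (D * Real.exp C * 2) / α := by
    intro α hα N
    rcases Nat.lt_or_ge N 2 with hN | hN
    · have h0 : ∀ ω, freeEnergy N M sigv lamv (P N) β ω = 0 := by
        intro ω
        interval_cases N <;> simp [freeEnergy]
      have hp0 : p ≠ 0 := by linarith
      simp only [h0, abs_zero, Real.zero_rpow hp0, zero_mul, MeasureTheory.integral_zero]
      positivity
    · obtain ⟨hi, hb⟩ := hZ N hN (P N) (hGFF N)
      have hprob : MeasureTheory.IsProbabilityMeasure (P N) := (hGFF N).1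
      have hN' : (2 : ℝ) ≤ N := by exact_mod_cast hN
      set L := Real.log ((N : ℝ) ^ 2) with hL
      have hL1 : 1 ≤ L := by
        rw [hL, Real.le_log_iff_exp_le (by positivity)]
        have := Real.exp_one_lt_d9
        nlinarith
      set g : FieldSp → ℝ := fun ω =>
        (D * Real.exp C) / α * (1 + Real.exp (-(C * L)) * ZN N M sigv lamv (P N) β ω) with hg
      have hgi : MeasureTheory.Integrable g (P N) :=
        ((MeasureTheory.integrable_const _).add (hi.const_mul _)).const_mul _
      have hle : ∀ᵐ ω ∂(P N), |freeEnergy N M sigv lamv (P N) β ω| ^ p *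
          (if α < |freeEnergy N M sigv lamv (P N) β ω| ^ p then (1 : ℝ) else 0) ≤ g ω := by
        filter_upwards [psi_corner (M := M) (sigv := sigv) (lamv := lamv) (hGFF N)] with ω hω
        have hZ1 : 1 ≤ ZN N M sigv lamv (P N) β ω := by
          have h0 : ((0, 0) : Vtx) ∈ VN N := by rw [mem_VN]; simp
          have := Finset.single_le_sum
            (f := fun v => Real.exp (β * psiFld N M sigv lamv (P N) v ω))
            (fun v _ => (Real.exp_pos _).le) h0
          simpa [hω, ZN] using this
        set Z := ZN N M sigv lamv (P N) β ω with hZdef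
        have hf : freeEnergy N M sigv lamv (P N) β ω = L⁻¹ * Real.log Z := rfl
        set f := freeEnergy N M sigv lamv (P N) β ω with hfdef
        have hf0 : 0 ≤ f := by
          rw [hf]
          exact mul_nonneg (by positivity) (Real.log_nonneg hZ1)
        have hZe : Z = Real.exp (L * f) := by
          rw [hf, mul_inv_cancel_left₀ (by positivity), Real.exp_log (by positivity)]
        rw [abs_of_nonneg hf0]
        have hexp : Real.exp f ≤ Real.exp C * (1 + Real.exp (-(C * L)) * Z) := by
          rw [hZe, ← Real.exp_add, mul_add, mul_one, ← Real.exp_add]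
          rcases le_total f C with h | h
          · have := Real.exp_le_exp.2 h
            have := Real.exp_pos (C + (-(C * L) + L * f))
            linarith
          · have : f ≤ C + (-(C * L) + L * f) := by nlinarith
            have := Real.exp_le_exp.2 this
            have := Real.exp_pos C
            linarith
        have hmain : (f ^ p) ^ 2 ≤ D * (Real.exp C * (1 + Real.exp (-(C * L)) * Z)) :=
          (hDx f hf0).trans (mul_le_mul_of_nonneg_left hexp hD.le)
        have hfp : 0 ≤ f ^ p := Real.rpow_nonneg hf0 p
        have hgω : g ω = D * (Real.exp C * (1 + Real.exp (-(C * L)) * Z)) / α := by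
          simp only [hg]; ring
        rw [hgω, le_div_iff₀ hα]
        refine le_trans ?_ hmain
        split_ifs with h
        · nlinarith
        · nlinarith [sq_nonneg (f ^ p)]
      have h0le : 0 ≤ᵐ[P N] fun ω => |freeEnergy N M sigv lamv (P N) β ω| ^ p *
          (if α < |freeEnergy N M sigv lamv (P N) β ω| ^ p then (1 : ℝ) else 0) := by
        refine MeasureTheory.ae_of_all _ fun ω => ?_
        refine mul_nonneg (Real.rpow_nonneg (abs_nonneg _) _) ?_
        split_ifs <;> norm_num
      refine (MeasureTheory.integral_mono_of_nonneg h0le hgi hle).trans ?_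
      have hgint : ∫ ω, g ω ∂(P N) = (D * Real.exp C) / α *
          (1 + Real.exp (-(C * L)) * ∫ ω, ZN N M sigv lamv (P N) β ω ∂(P N)) := by
        simp only [hg]
        rw [MeasureTheory.integral_const_mul, MeasureTheory.integral_add
          (MeasureTheory.integrable_const _) (hi.const_mul _), MeasureTheory.integral_const_mul]
        simp
      have hlast : Real.exp (-(C * L)) * ∫ ω, ZN N M sigv lamv (P N) β ω ∂(P N) ≤ 1 := by
        calc _ ≤ Real.exp (-(C * L)) * Real.exp (C * L) := by gcongr
          _ = 1 := by rw [← Real.exp_add]; simp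
      rw [hgint]
      calc _ ≤ (D * Real.exp C) / α * (1 + 1) := by gcongr
        _ = _ := by ring
  have hnn : ∀ α : ℝ, 0 ≤ ⨆ N : ℕ, ∫ ω, |freeEnergy N M sigv lamv (P N) β ω| ^ p *
          (if α < |freeEnergy N M sigv lamv (P N) β ω| ^ p then (1 : ℝ) else 0) ∂(P N) := by
    intro α
    refine Real.iSup_nonneg fun N => MeasureTheory.integral_nonneg fun ω => ?_
    refine mul_nonneg (Real.rpow_nonneg (abs_nonneg _) _) ?_
    split_ifs <;> norm_num
  refine tendsto_of_tendsto_of_tendsto_of_le_of_le' tendsto_const_nhds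
    (tendsto_const_nhds.div_atTop tendsto_id : Tendsto (fun α : ℝ => (D * Real.exp C * 2) / α)
      atTop (nhds 0)) (Eventually.of_forall hnn) ?_
  filter_upwards [eventually_gt_atTop 0] with α hα
  exact ciSup_le (hbound α hα)
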